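/- Let (X,d) be a metric space and μ a Borel measure on X. Let 1 < p ≤ Q < ∞ and suppose μ(B(x,r)) ≤ C·r^Q for all x ∈ X and r > 0 (closed balls), where C > 0 is a fixed constant. Let A ⊆ X be a compact set with H^{Q-p}(A) < ∞, where H^{Q-p} is the (Q−p)-dimensional Hausdorff measure. Then M_p(Γ_A) = 0, where Γ_A is the family of all curves parametrized by arc length whose image intersects A; that is, for every ε > 0 there exists a Borel function ρ : X → [0,∞] with ∫_X ρ^p dμ ≤ ε such that ∫_0^L ρ(c(t)) dt ≥ 1 for every L > 0 and every curve c : [0,L] → X parametrized by arc length with image meeting A. -/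

import Mathlib

open MeasureTheory Set Metric
open scoped ENNReal

/-- A curve `c : [0,L] → X` parametrized by arc length: `c` is 1-Lipschitz on `[0,L]`
and its length (total variation) on each subinterval `[s,t] ⊆ [0,L]` equals `t - s`. -/
def IsArcLengthParam {X : Type*} [PseudoMetricSpace X] (L : ℝ) (c : ℝ → X) : Prop :=
  LipschitzOnWith 1 c (Icc 0 L) ∧
    ∀ s t : ℝ, 0 ≤ s → s ≤ t → t ≤ L →
      eVariationOn c (Icc s t) = ENNReal.ofReal (t - s)


lemma aux_cover {X : Type*} [MetricSpace X] [MeasurableSpace X] [BorelSpace X]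
    (d : ℝ) (hd : 0 ≤ d) (A : Set X) (hAc : IsCompact A) (hA : A.Nonempty)
    (hH : μH[d] A < ⊤) (δ : ℝ) (hδ : 0 < δ) :
    ∃ (S : Finset ℕ) (x : ℕ → X) (r : ℕ → ℝ),
      (∀ n ∈ S, x n ∈ A ∧ 0 < r n ∧ r n < δ) ∧
      A ⊆ ⋃ n ∈ S, ball (x n) (r n) ∧
      ∑ n ∈ S, ENNReal.ofReal (r n ^ d) ≤ μH[d] A + 1 + 2 := by
  have h1 : (⨅ (t : ℕ → Set X) (_ : A ⊆ ⋃ n, t n) (_ : ∀ n, ediam (t n) ≤ ENNReal.ofReal (δ / 2)),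
          ∑' n, ⨆ _ : (t n).Nonempty, ediam (t n) ^ d) < μH[d] A + 1 := by
    refine lt_of_le_of_lt ?_ (ENNReal.lt_add_right hH.ne one_ne_zero)
    rw [MeasureTheory.Measure.hausdorffMeasure_apply]
    exact le_iSup₂_of_le (ENNReal.ofReal (δ / 2)) (by simpa using hδ) le_rfl
  simp only [iInf_lt_iff] at h1
  obtain ⟨t, hcov, hdiam, hsum⟩ := h1
  have key : ∀ n, ∃ (x : X) (r : ℝ), (t n ∩ A).Nonempty →
      (x ∈ A ∧ 0 < r ∧ r < δ ∧ t n ⊆ ball x r ∧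
        ENNReal.ofReal (r ^ d) ≤ (⨆ _ : (t n).Nonempty, ediam (t n) ^ d) + 2⁻¹ ^ n) := by
    intro n
    by_cases hne : (t n ∩ A).Nonempty
    swap
    · exact ⟨hA.some, 0, fun h => absurd h hne⟩
    obtain ⟨x, hxt, hxA⟩ := hne
    have hfin : ediam (t n) ≠ ⊤ := ne_top_of_le_ne_top ENNReal.ofReal_ne_top (hdiam n)
    set e := (ediam (t n)).toReal with he
    have hee : ediam (t n) = ENNReal.ofReal e := (ENNReal.ofReal_toReal hfin).symm
    have he0 : 0 ≤ e := ENNReal.toReal_nonneg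
    have heδ : e < δ := by
      have : e ≤ δ / 2 := ENNReal.toReal_le_of_le_ofReal (by positivity) (hdiam n)
      linarith
    have hc : ContinuousAt (fun r : ℝ => r ^ d) e := Real.continuousAt_rpow_const _ _ (Or.inr hd)
    have h2 : ∀ᶠ r in nhds e, r ^ d < e ^ d + (2⁻¹ : ℝ) ^ n :=
      hc.eventually_lt_const (by simp)
    have h3 : ∀ᶠ r in nhdsWithin e (Ioi e), r ^ d < e ^ d + (2⁻¹ : ℝ) ^ n :=
      nhdsWithin_le_nhds h2
    have h4 : ∀ᶠ r in nhdsWithin e (Ioi e), r ∈ Ioo e δ := Ioo_mem_nhdsGT heδ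
    obtain ⟨r, hr1, hr2⟩ := (h3.and h4).exists
    refine ⟨x, r, fun _ => ⟨hxA, lt_of_le_of_lt he0 hr2.1, hr2.2, ?_, ?_⟩⟩
    · intro y hy
      have := edist_le_ediam_of_mem hy hxt
      rw [hee, edist_le_ofReal he0] at this
      exact mem_ball.2 (lt_of_le_of_lt this hr2.1)
    · rw [iSup_pos ⟨x, hxt⟩, hee, ENNReal.ofReal_rpow_of_nonneg he0 hd]
      have : (2⁻¹ : ℝ≥0∞) ^ n = ENNReal.ofReal ((2⁻¹ : ℝ) ^ n) := by
        rw [ENNReal.ofReal_pow (by norm_num), ENNReal.ofReal_inv_of_pos (by norm_num)]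
        simp
      rw [this, ← ENNReal.ofReal_add (by positivity) (by positivity)]
      exact ENNReal.ofReal_le_ofReal hr1.le
  choose x r hxr using key
  obtain ⟨T, hTI, hTf, hT⟩ := hAc.elim_finite_subcover_image
    (b := {n | (t n ∩ A).Nonempty}) (c := fun n => ball (x n) (r n)) (fun _ _ => isOpen_ball) (by
      intro a ha
      obtain ⟨n, hn⟩ := mem_iUnion.1 (hcov ha)
      have hne : (t n ∩ A).Nonempty := ⟨a, hn, ha⟩
      exact mem_biUnion (x := n) hne ((hxr n hne).2.2.2.1 hn))
  refine ⟨hTf.toFinset, x, r, ?_, ?_, ?_⟩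
  · intro n hn
    have := hxr n (hTI (by simpa using hn))
    exact ⟨this.1, this.2.1, this.2.2.1⟩
  · simpa using hT
  · calc ∑ n ∈ hTf.toFinset, ENNReal.ofReal (r n ^ d)
        ≤ ∑ n ∈ hTf.toFinset, ((⨆ _ : (t n).Nonempty, ediam (t n) ^ d) + 2⁻¹ ^ n) :=
          Finset.sum_le_sum fun n hn => (hxr n (hTI (by simpa using hn))).2.2.2.2
      _ ≤ ∑' n, ((⨆ _ : (t n).Nonempty, ediam (t n) ^ d) + 2⁻¹ ^ n) := ENNReal.sum_le_tsum _
      _ = (∑' n, (⨆ _ : (t n).Nonempty, ediam (t n) ^ d)) + 2 := by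
          rw [ENNReal.tsum_add, ENNReal.tsum_geometric, ENNReal.one_sub_inv_two, inv_inv]
      _ ≤ _ := by gcongr

lemma aux_null {X : Type*} [MetricSpace X] [MeasurableSpace X] [BorelSpace X]
    (μ : Measure X) (p Q C : ℝ) (hp1 : 1 < p) (hpQ : p ≤ Q) (hC : 0 < C)
    (hgrowth : ∀ (x : X) (r : ℝ), 0 < r →
      μ (closedBall x r) ≤ ENNReal.ofReal (C * r ^ Q))
    (A : Set X) (hAc : IsCompact A) (hA : A.Nonempty) (hH : μH[Q - p] A < ⊤) : μ A = 0 := by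
  set M := μH[Q - p] A + 1 + 2 with hM
  have hMt : M ≠ ⊤ := by simp [hM, hH.ne]
  have hb : ∀ δ : ℝ, 0 < δ → μ A ≤ ENNReal.ofReal (C * δ ^ p) * M := by
    intro δ hδ
    obtain ⟨S, x, r, h1, h2, h3⟩ := aux_cover (Q - p) (by linarith) A hAc hA hH δ hδ
    calc μ A ≤ μ (⋃ n ∈ S, ball (x n) (r n)) := measure_mono h2
      _ ≤ ∑ n ∈ S, μ (ball (x n) (r n)) := measure_biUnion_finset_le _ _
      _ ≤ ∑ n ∈ S, ENNReal.ofReal (C * δ ^ p) * ENNReal.ofReal (r n ^ (Q - p)) := by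
          refine Finset.sum_le_sum fun n hn => ?_
          obtain ⟨-, hr, hr'⟩ := h1 n hn
          refine (measure_mono ball_subset_closedBall).trans ((hgrowth _ _ hr).trans ?_)
          rw [← ENNReal.ofReal_mul (by positivity)]
          apply ENNReal.ofReal_le_ofReal
          have : r n ^ Q = r n ^ p * r n ^ (Q - p) := by
            rw [← Real.rpow_add hr]; congr 1; ring
          rw [this, ← mul_assoc]
          gcongr
      _ ≤ _ := by rw [← Finset.mul_sum]; gcongr
  have hlim : Filter.Tendsto (fun δ : ℝ => ENNReal.ofReal (C * δ ^ p) * M)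
      (nhdsWithin 0 (Ioi 0)) (nhds 0) := by
    have h0 : Filter.Tendsto (fun δ : ℝ => C * δ ^ p) (nhdsWithin 0 (Ioi 0)) (nhds 0) := by
      have : ContinuousAt (fun δ : ℝ => C * δ ^ p) 0 :=
        continuousAt_const.mul (Real.continuousAt_rpow_const _ _ (Or.inr (by linarith)))
      have h := this.tendsto
      simp only [Real.zero_rpow (by linarith : p ≠ 0), mul_zero] at h
      exact h.mono_left nhdsWithin_le_nhds
    have := ENNReal.Tendsto.mul_const (ENNReal.tendsto_ofReal h0) (Or.inr hMt)
    simpa using this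
  have := ge_of_tendsto hlim (Filter.eventually_of_mem self_mem_nhdsWithin fun δ hδ => hb δ hδ)
  exact le_antisymm this bot_le

/-- crossing estimate, forward direction -/
lemma aux_cross {X : Type*} [MetricSpace X] (S : Finset ℕ) (x : ℕ → X) (r : ℕ → ℝ)
    (hr : ∀ n ∈ S, 0 < r n) (g : X → ℝ≥0∞)
    (hg : ∀ n ∈ S, ∀ y ∈ closedBall (x n) (2 * r n), (∀ m ∈ S, y ∉ ball (x m) (r m)) →
      ENNReal.ofReal (r n)⁻¹ ≤ g y)
    (a b : ℝ) (hab : a ≤ b) (c : ℝ → X) (hc : LipschitzOnWith 1 c (Icc a b))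
    (ha : ∃ n ∈ S, c a ∈ closedBall (x n) (r n))
    (hb : ∀ n ∈ S, c b ∉ closedBall (x n) (2 * r n)) :
    1 ≤ ∫⁻ t in Icc a b, g (c t) := by
  set F := ⋃ n ∈ S, closedBall (x n) (r n) with hF
  have hFc : IsClosed F := S.finite_toSet.isClosed_biUnion fun _ _ => isClosed_closedBall
  have hT : IsCompact (Icc a b ∩ c ⁻¹' F) :=
    isCompact_Icc.of_isClosed_subset (hc.continuousOn.preimage_isClosed_of_isClosed isClosed_Icc hFc)
      inter_subset_left
  have hTn : (Icc a b ∩ c ⁻¹' F).Nonempty := by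
    obtain ⟨n, hn, h⟩ := ha
    exact ⟨a, ⟨le_rfl, hab⟩, mem_iUnion₂.2 ⟨n, hn, h⟩⟩
  obtain ⟨s, ⟨hs, hsF⟩, hmax⟩ := hT.exists_isGreatest hTn
  obtain ⟨n, hn, hsn⟩ := mem_iUnion₂.1 hsF
  have hrn := hr n hn
  rw [mem_closedBall] at hsn
  have hd : ∀ t ∈ Icc s b, dist (c t) (x n) ≤ r n + (t - s) := by
    intro t ht
    have h1 := hc.dist_le_mul t ⟨hs.1.trans ht.1, ht.2⟩ s hs
    rw [Real.dist_eq, abs_of_nonneg (by linarith [ht.1])] at h1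
    have := dist_triangle (c t) (c s) (x n)
    simp only [NNReal.coe_one, one_mul] at h1
    linarith
  have hsb : s + r n < b := by
    have h1 := hd b ⟨hs.2, le_rfl⟩
    have h2 := hb n hn
    rw [mem_closedBall, not_le] at h2
    linarith
  calc (1 : ℝ≥0∞) = ENNReal.ofReal (r n)⁻¹ * volume (Ioo s (s + r n)) := by
        rw [Real.volume_Ioo, ← ENNReal.ofReal_mul (by positivity)]
        simp [hrn.ne']
    _ = ∫⁻ t in Ioo s (s + r n), ENNReal.ofReal (r n)⁻¹ := by rw [setLIntegral_const]
    _ ≤ ∫⁻ t in Ioo s (s + r n), g (c t) := by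
        refine setLIntegral_mono' measurableSet_Ioo fun t ht => ?_
        have htI : t ∈ Icc s b := ⟨ht.1.le, by linarith [ht.2]⟩
        refine hg n hn _ (mem_closedBall.2 (by linarith [hd t htI, ht.2])) fun m hm hmem => ?_
        have : t ≤ s := hmax ⟨⟨hs.1.trans htI.1, htI.2⟩,
          mem_iUnion₂.2 ⟨m, hm, ball_subset_closedBall hmem⟩⟩
        linarith [ht.1]
    _ ≤ ∫⁻ t in Icc a b, g (c t) := by
        refine lintegral_mono_set ?_
        intro t ht
        exact ⟨by linarith [ht.1, hs.1], by linarith [ht.2]⟩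

lemma aux_step {X : Type*} [MetricSpace X] [MeasurableSpace X] [BorelSpace X]
    (μ : Measure X) (p Q C : ℝ) (hp1 : 1 < p) (hpQ : p ≤ Q) (hC : 0 < C)
    (hgrowth : ∀ (x : X) (r : ℝ), 0 < r →
      μ (closedBall x r) ≤ ENNReal.ofReal (C * r ^ Q))
    (A : Set X) (hAc : IsCompact A) (hA : A.Nonempty) (hH : μH[Q - p] A < ⊤)
    (U : Set X) (hU : IsOpen U) (hAU : A ⊆ U) :
    ∃ (V : Set X) (g : X → ℝ≥0∞), IsOpen V ∧ A ⊆ V ∧ V ⊆ U ∧ Measurable g ∧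
      (∀ y, y ∉ U → g y = 0) ∧ (∀ y ∈ V, g y = 0) ∧
      ∫⁻ y, g y ^ p ∂μ ≤ ENNReal.ofReal (C * 2 ^ Q) * (μH[Q - p] A + 1 + 2) ∧
      ∀ L : ℝ, ∀ c : ℝ → X, LipschitzOnWith 1 c (Icc 0 L) →
        (∃ t ∈ Icc 0 L, c t ∈ A) → (∃ t ∈ Icc 0 L, c t ∉ U) →
        1 ≤ ∫⁻ t in Icc 0 L, g (c t) := by
  have hp0 : 0 < p := by linarith
  obtain ⟨δ, hδ, hδU⟩ := hAc.exists_cthickening_subset_open hU hAU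
  obtain ⟨S, x, r, h1, h2, h3⟩ := aux_cover (Q - p) (by linarith) A hAc hA hH (δ / 2) (by positivity)
  set V := ⋃ n ∈ S, ball (x n) (r n) with hV
  have hVo : IsOpen V := isOpen_biUnion fun _ _ => isOpen_ball
  have hBU : ∀ n ∈ S, closedBall (x n) (2 * r n) ⊆ U := by
    intro n hn
    obtain ⟨ha, hr, hr'⟩ := h1 n hn
    refine (closedBall_subset_closedBall (by linarith)).trans
      ((closedBall_subset_cthickening ha δ).trans hδU)
  let f : ℕ → X → ℝ≥0∞ := fun n =>
    (closedBall (x n) (2 * r n) \ V).indicator fun _ => ENNReal.ofReal (r n)⁻¹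
  have hfm : ∀ n, Measurable (f n) := fun n =>
    measurable_const.indicator (measurableSet_closedBall.diff hVo.measurableSet)
  let g : X → ℝ≥0∞ := fun y => (∑ n ∈ S, f n y ^ p) ^ (1 / p)
  have hgp : ∀ y, g y ^ p = ∑ n ∈ S, f n y ^ p := fun y => by
    simp only [g]; rw [← ENNReal.rpow_mul, one_div_mul_cancel hp0.ne', ENNReal.rpow_one]
  have hg0 : ∀ y, (∀ n ∈ S, f n y = 0) → g y = 0 := by
    intro y hy
    simp only [g]
    rw [Finset.sum_eq_zero fun n hn => by rw [hy n hn, ENNReal.zero_rpow_of_pos hp0],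
      ENNReal.zero_rpow_of_pos (by positivity)]
  have hgf : ∀ n ∈ S, ∀ y, f n y ≤ g y := by
    intro n hn y
    rw [← ENNReal.rpow_le_rpow_iff hp0, hgp]
    exact Finset.single_le_sum (f := fun n => f n y ^ p) (fun _ _ => zero_le) hn
  have hgS : ∀ n ∈ S, ∀ y ∈ closedBall (x n) (2 * r n), (∀ m ∈ S, y ∉ ball (x m) (r m)) →
      ENNReal.ofReal (r n)⁻¹ ≤ g y := by
    intro n hn y hy hm
    refine le_trans ?_ (hgf n hn y)
    have : y ∈ closedBall (x n) (2 * r n) \ V := ⟨hy, by simpa [hV] using hm⟩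
    simp only [f]
    rw [indicator_of_mem this]
  refine ⟨V, g, hVo, h2, ?_, ?_, ?_, ?_, ?_, ?_⟩
  · refine iUnion₂_subset fun n hn => subset_trans ?_ (hBU n hn)
    exact ball_subset_closedBall.trans (closedBall_subset_closedBall (by linarith [(h1 n hn).2.1]))
  · exact (Finset.measurable_fun_sum _ fun n _ => (hfm n).pow_const p).pow_const _
  · exact fun y hy => hg0 y fun n hn => indicator_of_notMem (fun h => hy (hBU n hn h.1)) _
  · exact fun y hy => hg0 y fun n hn => indicator_of_notMem (fun h => h.2 hy) _
  · simp_rw [hgp]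
    rw [lintegral_finsetSum _ fun n _ => (hfm n).pow_const p]
    calc ∑ n ∈ S, ∫⁻ y, f n y ^ p ∂μ
        ≤ ∑ n ∈ S, ENNReal.ofReal (C * 2 ^ Q) * ENNReal.ofReal (r n ^ (Q - p)) := by
          refine Finset.sum_le_sum fun n hn => ?_
          obtain ⟨-, hr, -⟩ := h1 n hn
          calc ∫⁻ y, f n y ^ p ∂μ
              ≤ ∫⁻ y, (closedBall (x n) (2 * r n)).indicator
                  (fun _ => ENNReal.ofReal ((r n)⁻¹ ^ p)) y ∂μ := by
                refine lintegral_mono fun y => ?_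
                by_cases hy : y ∈ closedBall (x n) (2 * r n) \ V
                · simp only [f]
                  rw [indicator_of_mem hy, indicator_of_mem hy.1,
                    ENNReal.ofReal_rpow_of_nonneg (by positivity) hp0.le]
                · simp only [f]
                  rw [indicator_of_notMem hy, ENNReal.zero_rpow_of_pos hp0]
                  exact zero_le
            _ = ENNReal.ofReal ((r n)⁻¹ ^ p) * μ (closedBall (x n) (2 * r n)) := by
                rw [lintegral_indicator_const measurableSet_closedBall]
            _ ≤ ENNReal.ofReal ((r n)⁻¹ ^ p) * ENNReal.ofReal (C * (2 * r n) ^ Q) := by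
                gcongr
                exact hgrowth _ _ (by positivity)
            _ = _ := by
                rw [← ENNReal.ofReal_mul (by positivity), ← ENNReal.ofReal_mul (by positivity)]
                congr 1
                rw [Real.mul_rpow (by norm_num) hr.le, Real.inv_rpow hr.le, Real.rpow_sub hr]
                field_simp
      _ ≤ _ := by rw [← Finset.mul_sum]; gcongr
  · rintro L c hc ⟨t₀, ht₀, hA₀⟩ ⟨t₁, ht₁, hU₁⟩
    have ha : ∃ n ∈ S, c t₀ ∈ closedBall (x n) (r n) := by
      obtain ⟨n, hn, h⟩ := mem_iUnion₂.1 (h2 hA₀)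
      exact ⟨n, hn, ball_subset_closedBall h⟩
    have hb : ∀ n ∈ S, c t₁ ∉ closedBall (x n) (2 * r n) := fun n hn h => hU₁ (hBU n hn h)
    rcases le_total t₀ t₁ with h | h
    · have hsub : Icc t₀ t₁ ⊆ Icc 0 L := Icc_subset_Icc ht₀.1 ht₁.2
      exact (aux_cross S x r (fun n hn => (h1 n hn).2.1) g hgS t₀ t₁ h c (hc.mono hsub) ha hb).trans
        (lintegral_mono_set hsub)
    · have hsub : Icc t₁ t₀ ⊆ Icc 0 L := Icc_subset_Icc ht₁.1 ht₀.2
      have hlip : LipschitzOnWith 1 (fun t => c (-t)) (Icc (-t₀) (-t₁)) := by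
        refine LipschitzOnWith.of_dist_le_mul fun u hu v hv => ?_
        have := hc.dist_le_mul (-u) (hsub ⟨by linarith [hu.2], by linarith [hu.1]⟩) (-v)
          (hsub ⟨by linarith [hv.2], by linarith [hv.1]⟩)
        rwa [dist_neg_neg] at this
      have := aux_cross S x r (fun n hn => (h1 n hn).2.1) g hgS (-t₀) (-t₁) (by linarith)
        (fun t => c (-t)) hlip (by simpa using ha) (by simpa using hb)
      have hmp := (Measure.measurePreserving_neg (volume : Measure ℝ)).setLIntegral_comp_preimage_emb
        (MeasurableEquiv.neg ℝ).measurableEmbedding (fun t => g (c t)) (Icc t₁ t₀)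
      have hpre : (Neg.neg ⁻¹' Icc t₁ t₀ : Set ℝ) = Icc (-t₀) (-t₁) := by
        ext u; simp only [mem_preimage, mem_Icc]; constructor <;> rintro ⟨_, _⟩ <;>
          constructor <;> linarith
      rw [hpre] at hmp
      rw [hmp] at this
      exact this.trans (lintegral_mono_set hsub)

/-- Let `(X,d)` be a metric space, `μ` a Borel measure with
`μ(B(x,r)) ≤ C·r^Q` (closed balls), `1 < p ≤ Q`, and `A ⊆ X` compact with
`H^{Q-p}(A) < ∞`. Then the family of arc-length parametrized curves meeting `A`
has zero `p`-modulus: for every `ε > 0` there is a Borel `ρ : X → [0,∞]` with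
`∫ ρ^p dμ ≤ ε` and `∫_0^L ρ(c(t)) dt ≥ 1` for every arc-length parametrized curve
`c : [0,L] → X` whose image meets `A`. -/
theorem stmt5 {X : Type*} [MetricSpace X] [MeasurableSpace X] [BorelSpace X]
    (μ : Measure X) (p Q C : ℝ) (hp1 : 1 < p) (hpQ : p ≤ Q) (hC : 0 < C)
    (hgrowth : ∀ (x : X) (r : ℝ), 0 < r →
      μ (closedBall x r) ≤ ENNReal.ofReal (C * r ^ Q))
    (A : Set X) (hAc : IsCompact A) (hH : μH[Q - p] A < ⊤) :
    ∀ ε : ℝ≥0∞, 0 < ε → ∃ ρ : X → ℝ≥0∞, Measurable ρ ∧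
      (∫⁻ x, ρ x ^ p ∂μ) ≤ ε ∧
      ∀ L : ℝ, 0 < L → ∀ c : ℝ → X, IsArcLengthParam L c →
        (∃ t ∈ Icc 0 L, c t ∈ A) →
        1 ≤ ∫⁻ t in Icc 0 L, ρ (c t) ∂volume := by

  intro ε hε
  rcases A.eq_empty_or_nonempty with hA | hA
  · exact ⟨0, measurable_const, by simp [ENNReal.zero_rpow_of_pos (by linarith : 0 < p)],
      fun L _ c _ ⟨t, _, ht⟩ => by simp [hA] at ht⟩
  have hp0 : 0 < p := by linarith
  have hA0 : μ A = 0 := aux_null μ p Q C hp1 hpQ hC hgrowth A hAc hA hH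
  set M := ENNReal.ofReal (C * 2 ^ Q) * (μH[Q - p] A + 1 + 2) with hM
  have hMt : M ≠ ⊤ := ENNReal.mul_ne_top ENNReal.ofReal_ne_top (by simp [hH.ne])
  have hstep := aux_step μ p Q C hp1 hpQ hC hgrowth A hAc hA hH
  choose V g hVo hAV hVU hgm hgU hgV hgp hgc using hstep
  let W : ℕ → {U : Set X // IsOpen U ∧ A ⊆ U} := fun k => Nat.rec ⟨univ, isOpen_univ, subset_univ _⟩
    (fun k U => ⟨V U.1 U.2.1 U.2.2 ∩ thickening (1 / ((k : ℝ) + 1)) A,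
      (hVo _ _ _).inter isOpen_thickening,
      subset_inter (hAV _ _ _) (self_subset_thickening (by positivity) _)⟩) k
  have hWsucc : ∀ k, (W (k + 1)).1 =
      V (W k).1 (W k).2.1 (W k).2.2 ∩ thickening (1 / ((k : ℝ) + 1)) A := fun k => rfl
  let G : ℕ → X → ℝ≥0∞ := fun k => g (W k).1 (W k).2.1 (W k).2.2
  have hGm : ∀ k, Measurable (G k) := fun k => hgm _ _ _
  have hanti : Antitone fun k => (W k).1 := antitone_nat_of_succ_le fun k => by
    rw [hWsucc]; exact inter_subset_left.trans (hVU _ _ _)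
  have hdisj' : ∀ j k, j < k → ∀ y, G j y ≠ 0 → G k y = 0 := by
    intro j k hjk y hj
    by_contra hk
    have h1 : y ∈ (W k).1 := by
      by_contra h; exact hk (hgU _ _ _ y h)
    have h2 : y ∈ (W (j + 1)).1 := hanti hjk h1
    rw [hWsucc] at h2
    exact hj (hgV _ _ _ y h2.1)
  have hdisj : ∀ j k, j ≠ k → ∀ y, G j y ≠ 0 → G k y = 0 := by
    intro j k hjk y hj
    rcases lt_or_gt_of_ne hjk with h | h
    · exact hdisj' j k h y hj
    · by_contra hk
      exact hj (hdisj' k j h y hk)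
  let b : ℕ → ℝ≥0∞ := fun k => ENNReal.ofReal (1 / ((k : ℝ) + 1))
  have hbdiv : ∀ K, ∑' k, b (k + K) = ⊤ := by
    intro K
    by_contra hne
    have h1 := ENNReal.summable_toReal hne
    have h2 : Summable fun k : ℕ => (1 / ((k + (K + 1) : ℕ) : ℝ)) := by
      refine h1.congr fun k => ?_
      simp only [b]
      rw [ENNReal.toReal_ofReal (by positivity)]
      push_cast
      ring_nf
    exact Real.not_summable_one_div_natCast ((summable_nat_add_iff (K + 1)).1 h2)
  have hbp : ∑' k, b k ^ p ≠ ⊤ := by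
    have h2 : Summable fun k : ℕ => (1 / ((k + 1 : ℕ) : ℝ) ^ p) :=
      (summable_nat_add_iff 1).2 (Real.summable_one_div_nat_rpow.2 hp1)
    have h3 : ∀ k, b k ^ p = ENNReal.ofReal (1 / ((k + 1 : ℕ) : ℝ) ^ p) := by
      intro k
      simp only [b]
      rw [ENNReal.ofReal_rpow_of_nonneg (by positivity) hp0.le,
        Real.div_rpow (by norm_num) (by positivity), Real.one_rpow]
      push_cast
      rfl
    simp_rw [h3]
    exact h2.tsum_ofReal_ne_top
  set K' := (∑' k, b k ^ p) * M + 1 with hK'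
  have hK't : K' ≠ ⊤ := by
    simp only [hK']
    exact ENNReal.add_ne_top.2 ⟨ENNReal.mul_ne_top hbp hMt, by simp⟩
  have hK'0 : K' ≠ 0 := by simp [hK']
  let η : ℝ≥0∞ := (ε / K') ^ (1 / p)
  have hηp : η ^ p = ε / K' := by
    simp only [η]; rw [← ENNReal.rpow_mul, one_div_mul_cancel hp0.ne', ENNReal.rpow_one]
  have hη0 : η ≠ 0 := by
    intro h
    rw [h, ENNReal.zero_rpow_of_pos hp0] at hηp
    exact (ENNReal.div_pos hε.ne' hK't).ne hηp
  let h : X → ℝ≥0∞ := fun y => η * ∑' k, b k * G k y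
  have hhm : Measurable h :=
    (Measurable.tsum fun k => (hGm k).const_mul _).const_mul _
  have hhp : ∀ y, h y ^ p = η ^ p * ∑' k, b k ^ p * G k y ^ p := by
    intro y
    simp only [h]
    rw [ENNReal.mul_rpow_of_nonneg _ _ hp0.le]
    congr 1
    by_cases hy : ∃ j, G j y ≠ 0
    · obtain ⟨j, hj⟩ := hy
      rw [tsum_eq_single j fun k hk => by rw [hdisj j k hk.symm y hj, mul_zero],
        tsum_eq_single j fun k hk => by
          rw [hdisj j k hk.symm y hj, ENNReal.zero_rpow_of_pos hp0, mul_zero],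
        ENNReal.mul_rpow_of_nonneg _ _ hp0.le]
    · push Not at hy
      simp [hy, ENNReal.zero_rpow_of_pos hp0]
  refine ⟨fun y => A.indicator (fun _ => ⊤) y + h y,
    (measurable_const.indicator hAc.measurableSet).add hhm, ?_, ?_⟩
  · calc ∫⁻ y, (A.indicator (fun _ => ⊤) y + h y) ^ p ∂μ = ∫⁻ y, h y ^ p ∂μ := by
          refine lintegral_congr_ae ?_
          have : ∀ᵐ y ∂μ, y ∉ A := measure_eq_zero_iff_ae_notMem.1 hA0
          filter_upwards [this] with y hy
          rw [indicator_of_notMem hy, zero_add]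
      _ = η ^ p * ∑' k, b k ^ p * ∫⁻ y, G k y ^ p ∂μ := by
          simp_rw [hhp]
          rw [lintegral_const_mul _ (Measurable.tsum fun k =>
            ((hGm k).pow_const p).const_mul _),
            lintegral_tsum fun k => (((hGm k).pow_const p).const_mul _).aemeasurable]
          congr 2
          ext k
          rw [lintegral_const_mul _ ((hGm k).pow_const p)]
      _ ≤ η ^ p * ∑' k, b k ^ p * M := by
          gcongr with k
          exact hgp _ _ _
      _ ≤ ε / K' * K' := by
          rw [ENNReal.tsum_mul_right, hηp]
          gcongr
          exact le_self_add
      _ ≤ ε := (ENNReal.div_mul_cancel hK'0 hK't).le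
  · rintro L hL c ⟨hc, -⟩ hmeet
    by_cases hall : ∀ t ∈ Icc 0 L, c t ∈ A
    · calc (1 : ℝ≥0∞) ≤ ⊤ := le_top
        _ = ∫⁻ t in Icc 0 L, ⊤ := by
            rw [setLIntegral_const, Real.volume_Icc, ENNReal.top_mul (by simpa using hL)]
        _ ≤ _ := by
            refine setLIntegral_mono' measurableSet_Icc fun t ht => ?_
            beta_reduce
            rw [indicator_of_mem (hall t ht)]
            exact le_self_add
    · push Not at hall
      obtain ⟨t₁, ht₁, htA⟩ := hall
      have hpos : 0 < infDist (c t₁) A := (hAc.isClosed.notMem_iff_infDist_pos hA).1 htA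
      obtain ⟨K, hK⟩ := exists_nat_one_div_lt hpos
      have hout : ∀ k, c t₁ ∉ (W (k + (K + 1))).1 := by
        intro k hk
        have h1 : c t₁ ∈ (W (K + 1)).1 := hanti (Nat.le_add_left (K + 1) k) hk
        rw [hWsucc] at h1
        have h2 := (mem_thickening_iff_infDist_lt hA).1 h1.2
        linarith
      have hone : ∀ k, 1 ≤ ∫⁻ t in Icc 0 L, G (k + (K + 1)) (c t) := fun k =>
        hgc _ _ _ L c hc hmeet ⟨t₁, ht₁, hout k⟩
      have hcm : AEMeasurable c (volume.restrict (Icc 0 L)) :=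
        hc.continuousOn.aemeasurable measurableSet_Icc
      have hGc : ∀ k, AEMeasurable (fun t => G k (c t)) (volume.restrict (Icc 0 L)) :=
        fun k => (hGm k).comp_aemeasurable hcm
      calc (1 : ℝ≥0∞) ≤ ⊤ := le_top
        _ = η * ∑' k, b (k + (K + 1)) := by rw [hbdiv, ENNReal.mul_top hη0]
        _ ≤ η * ∑' k, b (k + (K + 1)) * ∫⁻ t in Icc 0 L, G (k + (K + 1)) (c t) := by
            gcongr with k
            exact le_mul_of_one_le_right' (hone k)
        _ ≤ η * ∑' k, b k * ∫⁻ t in Icc 0 L, G k (c t) := by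
            refine mul_le_mul_right ?_ η
            exact ENNReal.tsum_comp_le_tsum_of_injective (add_left_injective (K + 1))
              (fun k => b k * ∫⁻ t in Icc 0 L, G k (c t))
        _ = ∫⁻ t in Icc 0 L, h (c t) := by
            simp only [h]
            rw [lintegral_const_mul'' _ (AEMeasurable.tsum fun k => (hGc k).const_mul _),
              lintegral_tsum fun k => (hGc k).const_mul _]
            congr 2
            ext k
            rw [lintegral_const_mul'' _ (hGc k)]
        _ ≤ _ := lintegral_mono fun t => le_add_self
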